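/- Let A and B be real n×n matrices with A antisymmetric and B symmetric positive definite, and let p_0, ..., p_{⌊n/2⌋} be the real coefficients defined by the polynomial identity (−1)^{⌊n/2⌋} · pf [[−λA, B], [−B, A]] = Σ_{t=0}^{⌊n/2⌋} p_t λ^t (as polynomials in the real variable λ). Then p_t > 0 for all t with 2t ≤ rank A, and p_t = 0 for all t with 2t > rank A. -/

import Mathlib

open Matrix BigOperators

/-- The pfaffian of a `2m × 2m` real matrix, via the symmetrized sum over all
permutations. -/
noncomputable def pf {m : ℕ} (C : Matrix (Fin (2 * m)) (Fin (2 * m)) ℝ) : ℝ :=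
  (1 / (m.factorial * 2 ^ m) : ℝ) *
    ∑ π : Equiv.Perm (Fin (2 * m)),
      ((Equiv.Perm.sign π : ℤ) : ℝ) *
        ∏ i : Fin m, C (π ⟨2 * i.val, by omega⟩) (π ⟨2 * i.val + 1, by omega⟩)

/-- The equivalence used to view a block `2n × 2n` matrix (indexed by `Fin n ⊕ Fin n`)
as a matrix indexed by `Fin (2 * n)`. -/
def blockIndex (n : ℕ) : (Fin n ⊕ Fin n) ≃ Fin (2 * n) :=
  finSumFinEquiv.trans (finCongr (by omega))


section PfHelpers

/-- Unnormalised pfaffian over an index set `ι × Fin 2`. -/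
noncomputable def pfP {ι : Type*} [Fintype ι] [DecidableEq ι]
    (C : Matrix (ι × Fin 2) (ι × Fin 2) ℝ) : ℝ :=
  ∑ π : Equiv.Perm (ι × Fin 2), ((Equiv.Perm.sign π : ℤ) : ℝ) *
    ∏ i : ι, C (π (i, 0)) (π (i, 1))

/-- Functions on `ι × Fin 2` as pairs of values. -/
def pairEquiv (ι κ : Type*) : (ι × Fin 2 → κ) ≃ (ι → κ × κ) where
  toFun F i := (F (i, 0), F (i, 1))
  invFun f p := if p.2 = 0 then (f p.1).1 else (f p.1).2
  left_inv F := by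
    funext ⟨i, b⟩
    fin_cases b <;> simp
  right_inv f := by
    funext i
    simp

lemma pfP_expand {ι : Type*} [Fintype ι] [DecidableEq ι]
    (X C : Matrix (ι × Fin 2) (ι × Fin 2) ℝ) :
    pfP (X * C * Xᵀ) = ∑ F : ι × Fin 2 → ι × Fin 2,
      (∏ i, C (F (i, 0)) (F (i, 1))) * (X.submatrix id F).det := by
  have h1 : ∀ a b, (X * C * Xᵀ) a b
      = ∑ q : (ι × Fin 2) × (ι × Fin 2), X a q.1 * C q.1 q.2 * X b q.2 := by
    intro a b
    refine Eq.trans ?_ (Fintype.sum_prod_type_right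
      (fun q : (ι × Fin 2) × (ι × Fin 2) => X a q.1 * C q.1 q.2 * X b q.2)).symm
    rw [Matrix.mul_apply]
    refine Finset.sum_congr rfl fun l _ => ?_
    rw [Matrix.mul_apply, Finset.sum_mul]
    rfl
  unfold pfP
  simp_rw [h1, Finset.prod_univ_sum, Fintype.piFinset_univ, Finset.mul_sum]
  rw [Finset.sum_comm]
  rw [← (pairEquiv ι (ι × Fin 2)).sum_comp]
  refine Finset.sum_congr rfl fun F _ => ?_
  rw [Matrix.det_apply', Finset.mul_sum]
  refine Finset.sum_congr rfl fun π _ => ?_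
  rw [Fintype.prod_prod_type]
  simp only [Fin.prod_univ_two, Finset.prod_mul_distrib, pairEquiv, Equiv.coe_fn_mk,
    Matrix.submatrix_apply, id]
  ring

lemma pfP_congr {ι : Type*} [Fintype ι] [DecidableEq ι]
    (X C : Matrix (ι × Fin 2) (ι × Fin 2) ℝ) :
    pfP (X * C * Xᵀ) = X.det * pfP C := by
  have h2 : pfP C = pfP (1 * C * (1 : Matrix (ι × Fin 2) (ι × Fin 2) ℝ)ᵀ) := by simp
  rw [h2, pfP_expand, pfP_expand, Finset.mul_sum]
  refine Finset.sum_congr rfl fun F _ => ?_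
  have h3 : X.submatrix id F = X * (1 : Matrix (ι × Fin 2) (ι × Fin 2) ℝ).submatrix id F := by
    ext a b
    simp [Matrix.mul_apply, Matrix.one_apply]
  rw [h3, Matrix.det_mul]
  ring

lemma pfP_perm {ι : Type*} [Fintype ι] [DecidableEq ι]
    (C : Matrix (ι × Fin 2) (ι × Fin 2) ℝ) (τ : Equiv.Perm (ι × Fin 2)) :
    pfP (C.submatrix τ τ) = ((Equiv.Perm.sign τ : ℤ) : ℝ) * pfP C := by
  unfold pfP
  rw [Finset.mul_sum]
  conv_rhs => rw [← Equiv.sum_comp (Equiv.mulLeft τ)]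
  refine Finset.sum_congr rfl fun π _ => ?_
  simp only [Equiv.coe_mulLeft, Equiv.Perm.sign_mul, Units.val_mul, Int.cast_mul,
    Equiv.Perm.coe_mul, Function.comp_apply, Matrix.submatrix_apply]
  have : ((Equiv.Perm.sign τ : ℤ) : ℝ) * ((Equiv.Perm.sign τ : ℤ) : ℝ) = 1 := by
    rw [← Int.cast_mul, ← Units.val_mul, Int.units_mul_self]; simp
  rw [← mul_assoc, ← mul_assoc, this, one_mul]

/-- `(i,0) ↦ inl i`, `(i,1) ↦ inr i`. -/
def gEquiv (ι : Type*) : ι × Fin 2 ≃ ι ⊕ ι where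
  toFun p := if p.2 = 0 then Sum.inl p.1 else Sum.inr p.1
  invFun := Sum.elim (fun i => (i, 0)) (fun i => (i, 1))
  left_inv := by
    rintro ⟨i, b⟩
    fin_cases b <;> simp
  right_inv := by
    rintro (i | i) <;> simp

/-- `(i,b) ↦ 2 i + b`. -/
def eEquiv (n : ℕ) : Fin n × Fin 2 ≃ Fin (2 * n) :=
  finProdFinEquiv.trans (finCongr (by omega))

lemma pf_eq_pfP {n : ℕ} (C : Matrix (Fin (2 * n)) (Fin (2 * n)) ℝ) :
    pf C = (1 / (n.factorial * 2 ^ n) : ℝ) * pfP (C.submatrix (eEquiv n) (eEquiv n)) := by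
  unfold pf pfP
  congr 1
  rw [← Equiv.sum_comp (eEquiv n).permCongr]
  refine Finset.sum_congr rfl fun π _ => ?_
  rw [Equiv.Perm.sign_permCongr]
  congr 1
  refine Finset.prod_congr rfl fun i _ => ?_
  have h0 : (eEquiv n).symm ⟨2 * i.val, by omega⟩ = (i, 0) := by
    rw [Equiv.symm_apply_eq]; ext; simp [eEquiv]
  have h1 : (eEquiv n).symm ⟨2 * i.val + 1, by omega⟩ = (i, 1) := by
    rw [Equiv.symm_apply_eq]; ext; simp [eEquiv]; omega
  simp [Equiv.permCongr_apply, h0, h1]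

lemma prod_sign_aux (n : ℕ) : ∏ x : Fin n, (-1 : ℤˣ) ^ (x : ℕ) = (-1) ^ (n / 2) := by
  rw [Fin.prod_univ_eq_prod_range (fun x => (-1 : ℤˣ) ^ x)]
  induction n with
  | zero => simp
  | succ n ih =>
    rw [Finset.prod_range_succ, ih, ← pow_add]
    obtain ⟨k, hk | hk⟩ := Nat.even_or_odd' n
    · subst hk
      rw [show 2 * k / 2 + 2 * k = k + 2 * k by omega, show (2 * k + 1) / 2 = k by omega,
        pow_add, pow_mul]; simp
    · subst hk
      rw [show (2 * k + 1) / 2 + (2 * k + 1) = (k + 1) + 2 * k by omega,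
        show (2 * k + 1 + 1) / 2 = k + 1 by omega, pow_add, pow_mul]; simp

lemma sign_shuffle (n : ℕ) (σ : Equiv.Perm (Fin (2 * n)))
    (hl : ∀ x : Fin n, (σ (blockIndex n (Sum.inl x))).val = 2 * x.val)
    (hr : ∀ x : Fin n, (σ (blockIndex n (Sum.inr x))).val = 2 * x.val + 1) :
    Equiv.Perm.sign σ = (-1) ^ (n / 2) := by
  have bl : ∀ x : Fin n, (blockIndex n (Sum.inl x)).val = x.val := by
    intro x; simp [blockIndex]
  have br : ∀ x : Fin n, (blockIndex n (Sum.inr x)).val = n + x.val := by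
    intro x; simp [blockIndex, add_comm]
  rw [Equiv.Perm.sign_eq_prod_prod_Iio]
  have h1 : ∀ j : Fin (2 * n), ∏ i ∈ Finset.Iio j, (if σ i < σ j then (1 : ℤˣ) else -1)
      = ∏ i, if i < j then (if σ i < σ j then (1 : ℤˣ) else -1) else 1 := by
    intro j
    rw [← Finset.prod_filter]
    congr 1
    ext; simp
  simp_rw [h1]
  rw [← Equiv.prod_comp (blockIndex n)]
  simp_rw [← Equiv.prod_comp (blockIndex n) (fun i => ite (i < _) _ _)]
  simp only [Fintype.prod_sum_type, Fin.lt_def, bl, br, hl, hr]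
  have e1 : ∀ x y : Fin n, (if (x : ℕ) < y then
      (if 2 * (x : ℕ) < 2 * y then (1 : ℤˣ) else -1) else 1) = 1 := by
    intro x y; split_ifs <;> first | rfl | omega
  have e2 : ∀ x y : Fin n, (if n + (x : ℕ) < y then
      (if 2 * (x : ℕ) + 1 < 2 * y then (1 : ℤˣ) else -1) else 1) = 1 := by
    intro x y; split_ifs <;> first | rfl | omega
  have e3 : ∀ x y : Fin n, (if n + (x : ℕ) < n + y then
      (if 2 * (x : ℕ) + 1 < 2 * y + 1 then (1 : ℤˣ) else -1) else 1) = 1 := by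
    intro x y; split_ifs <;> first | rfl | omega
  have e4 : ∀ x y : Fin n, (if (x : ℕ) < n + y then
      (if 2 * (x : ℕ) < 2 * y + 1 then (1 : ℤˣ) else -1) else 1)
        = if y < x then -1 else 1 := by
    intro x y; simp only [Fin.lt_def]; split_ifs <;> first | rfl | omega
  simp only [e1, e2, e3, e4, Finset.prod_const_one, mul_one, one_mul]
  rw [Finset.prod_comm, ← prod_sign_aux]
  refine Finset.prod_congr rfl fun x _ => ?_
  rw [← Finset.prod_filter, Finset.prod_const]
  congr 1
  have : (Finset.univ.filter fun y : Fin n => y < x) = Finset.Iio x := by ext; simp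
  rw [this, Fin.card_Iio]

lemma pf_block {n : ℕ} (M : Matrix (Fin n ⊕ Fin n) (Fin n ⊕ Fin n) ℝ) :
    pf (M.submatrix (blockIndex n).symm (blockIndex n).symm)
      = (1 / (n.factorial * 2 ^ n) : ℝ) * ((-1) ^ (n / 2) *
          pfP (M.submatrix (gEquiv (Fin n)) (gEquiv (Fin n)))) := by
  rw [pf_eq_pfP]
  congr 1
  set τ : Equiv.Perm (Fin n × Fin 2) :=
    ((eEquiv n).trans (blockIndex n).symm).trans (gEquiv (Fin n)).symm with hτ
  have h1 : (M.submatrix (blockIndex n).symm (blockIndex n).symm).submatrix (eEquiv n) (eEquiv n)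
      = (M.submatrix (gEquiv (Fin n)) (gEquiv (Fin n))).submatrix τ τ := by
    ext a b; simp [hτ]
  rw [h1, pfP_perm]
  congr 1
  have h2 : Equiv.Perm.sign τ = (-1) ^ (n / 2) := by
    have h3 : Equiv.Perm.sign τ = Equiv.Perm.sign ((((blockIndex n).symm.trans
      (gEquiv (Fin n)).symm).trans (eEquiv n) : Equiv.Perm (Fin (2 * n)))) := by
      rw [← Equiv.Perm.sign_permCongr (eEquiv n)]
      congr 1
      ext x; simp [hτ, Equiv.permCongr_apply]
    rw [h3]
    apply sign_shuffle
    · intro x; simp [gEquiv, eEquiv]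
    · intro x; simp [gEquiv, eEquiv]; omega
  rw [h2]; simp

/-- Standard symplectic form on `ι × Fin 2` is positive. -/
lemma pfP_J_pos {ι : Type*} [Fintype ι] [DecidableEq ι] :
    0 < pfP ((Matrix.fromBlocks 0 1 (-1) 0 : Matrix (ι ⊕ ι) (ι ⊕ ι) ℝ).submatrix
      (gEquiv ι) (gEquiv ι)) := by
  set J := ((Matrix.fromBlocks 0 1 (-1) 0 : Matrix (ι ⊕ ι) (ι ⊕ ι) ℝ).submatrix
      (gEquiv ι) (gEquiv ι)) with hJ
  have hJv : ∀ a b, J a b = if a.1 = b.1 ∧ a.2 ≠ b.2 then (if a.2 = 0 then 1 else -1) else 0 := by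
    rintro ⟨a, s⟩ ⟨b, t⟩
    fin_cases s <;> fin_cases t <;> by_cases hab : a = b <;> simp [hJ, gEquiv, hab]
  unfold pfP
  refine Finset.sum_pos' (fun π _ => ?_) ⟨1, Finset.mem_univ _, ?_⟩
  · by_cases hz : ∏ i, J (π (i, 0)) (π (i, 1)) = 0
    · rw [hz, mul_zero]
    replace hz := Finset.prod_ne_zero_iff.mp hz
    have hz' : ∀ i, (π (i, 0)).1 = (π (i, 1)).1 ∧ (π (i, 0)).2 ≠ (π (i, 1)).2 := by
      intro i
      by_contra hc
      exact hz i (Finset.mem_univ _) (by rw [hJv, if_neg hc])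
    have hinj : Function.Injective (fun i => (π (i, 0)).1) := by
      intro i j hij
      by_contra hne
      simp only at hij
      have h0 : π (i, 0) ≠ π (j, 0) := fun h => hne (by simpa using π.injective h)
      have h1 : π (i, 0) ≠ π (j, 1) := fun h => hne (by
        have := congrArg Prod.fst (π.injective h); simpa using this)
      have a0 : (π (i, 0)).2 ≠ (π (j, 0)).2 := fun h => h0 (Prod.ext hij h)
      have a1 : (π (i, 0)).2 ≠ (π (j, 1)).2 := fun h => h1 (Prod.ext (hij.trans (hz' j).1) h)
      have a2 := (hz' j).2
      omega
    let g : Equiv.Perm ι := Equiv.ofBijective _ (Finite.injective_iff_bijective.mp hinj)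
    let fl : ι → Equiv.Perm (Fin 2) := fun i => if (π (i, 0)).2 = 0 then 1 else Equiv.swap 0 1
    have hπ : π = (Equiv.prodCongrLeft (fun _ : Fin 2 => g)) * (Equiv.prodCongrRight fl) := by
      ext1 ⟨i, b⟩
      have hi := hz' i
      have hg : g i = (π (i, 0)).1 := rfl
      apply Prod.ext
      · fin_cases b
        · simp [hg]
        · simp [hg, hi.1]
      · simp only [Equiv.Perm.coe_mul, Function.comp_apply, Equiv.prodCongrRight_apply,
          Equiv.prodCongrLeft_apply, fl]
        split_ifs with h
        · fin_cases b
          · simpa using h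
          · simp; omega
        · fin_cases b
          · simp; omega
          · simp; omega
    have hs : Equiv.Perm.sign π = ∏ i, Equiv.Perm.sign (fl i) := by
      rw [hπ, Equiv.Perm.sign_mul, Equiv.Perm.sign_prodCongrLeft, Equiv.Perm.sign_prodCongrRight]
      simp
    rw [hs, Units.coe_prod, Int.cast_prod, ← Finset.prod_mul_distrib]
    refine Finset.prod_nonneg fun i _ => ?_
    rw [hJv, if_pos (hz' i)]
    simp only [fl]
    split_ifs <;> simp
  · simp [hJv]

lemma pfP_block_congr {ι : Type*} [Fintype ι] [DecidableEq ι]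
    (X M : Matrix (ι ⊕ ι) (ι ⊕ ι) ℝ) :
    pfP ((X * M * Xᵀ).submatrix (gEquiv ι) (gEquiv ι))
      = X.det * pfP (M.submatrix (gEquiv ι) (gEquiv ι)) := by
  rw [← Matrix.submatrix_mul_equiv (X * M) Xᵀ _ (gEquiv ι),
    ← Matrix.submatrix_mul_equiv X M _ (gEquiv ι), ← Matrix.transpose_submatrix, pfP_congr,
    Matrix.det_submatrix_equiv_self]

lemma pfP_offdiag {ι : Type*} [Fintype ι] [DecidableEq ι] (D : Matrix ι ι ℝ) :
    pfP ((Matrix.fromBlocks 0 D (-Dᵀ) 0).submatrix (gEquiv ι) (gEquiv ι))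
      = D.det * pfP ((Matrix.fromBlocks 0 1 (-1) 0 : Matrix (ι ⊕ ι) (ι ⊕ ι) ℝ).submatrix
      (gEquiv ι) (gEquiv ι)) := by
  have h : Matrix.fromBlocks 0 D (-Dᵀ) 0 = Matrix.fromBlocks D 0 0 1 *
      (Matrix.fromBlocks 0 1 (-1) 0 : Matrix (ι ⊕ ι) (ι ⊕ ι) ℝ) *
      (Matrix.fromBlocks D 0 0 1)ᵀ := by
    simp [Matrix.fromBlocks_transpose, Matrix.fromBlocks_multiply]
  rw [h, pfP_block_congr]
  simp

lemma pfP_main {ι : Type*} [Fintype ι] [DecidableEq ι] (A B : Matrix ι ι ℝ)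
    (hA : Aᵀ = -A) (hB : Bᵀ = B) (s : ℝ) (hs : s ≠ 0) :
    pfP ((Matrix.fromBlocks (-((s ^ 2) • A)) B (-B) A).submatrix (gEquiv ι) (gEquiv ι))
      = (B + s • A).det * pfP ((Matrix.fromBlocks 0 1 (-1) 0 :
        Matrix (ι ⊕ ι) (ι ⊕ ι) ℝ).submatrix (gEquiv ι) (gEquiv ι)) := by
  have h : Matrix.fromBlocks 0 ((2 * s) • (B + s • A)) (-((2 * s) • (B + s • A))ᵀ) 0
      = (Matrix.fromBlocks 1 (s • 1) (-1) (s • 1) : Matrix (ι ⊕ ι) (ι ⊕ ι) ℝ) *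
        Matrix.fromBlocks (-((s ^ 2) • A)) B (-B) A *
        (Matrix.fromBlocks 1 (s • 1) (-1) (s • 1) : Matrix (ι ⊕ ι) (ι ⊕ ι) ℝ)ᵀ := by
    simp only [Matrix.fromBlocks_transpose, Matrix.fromBlocks_multiply, Matrix.transpose_smul,
      Matrix.transpose_add, Matrix.transpose_one, Matrix.transpose_neg, hA, hB]
    congr 1 <;> · simp; module
  have h2 := pfP_offdiag ((2 * s) • (B + s • A))
  rw [h, pfP_block_congr, Matrix.det_fromBlocks_one₁₁, Matrix.det_smul] at h2
  have h3 : (s • 1 - -1 * s • (1 : Matrix ι ι ℝ)) = (2 * s) • 1 := by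
    simp; module
  rw [h3, Matrix.det_smul, Matrix.det_one, mul_one, mul_assoc] at h2
  exact mul_left_cancel₀ (pow_ne_zero _ (by simpa using hs)) h2

end PfHelpers

section PolyHelpers

open Polynomial

lemma coeff_pos_of_neg_roots (m : Multiset ℝ) (hm : ∀ r ∈ m, r < 0) :
    ∀ t ≤ Multiset.card m, 0 < ((m.map (fun r => (X - C r : ℝ[X]))).prod).coeff t := by
  induction m using Multiset.induction_on with
  | empty => intro t ht; simp at ht; subst ht; simp
  | cons r m ih =>
    have ih' := ih (fun x hx => hm x (Multiset.mem_cons_of_mem hx))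
    have hr := hm r (Multiset.mem_cons_self r m)
    set Q := (m.map (fun r => (X - C r : ℝ[X]))).prod with hQ
    have hdeg : Q.natDegree = Multiset.card m := by
      rw [hQ, natDegree_multiset_prod_X_sub_C_eq_card]
    have hnn : ∀ t, 0 ≤ Q.coeff t := by
      intro t
      by_cases h : t ≤ Multiset.card m
      · exact (ih' t h).le
      · rw [coeff_eq_zero_of_natDegree_lt (by omega)]
    intro t ht
    rw [Multiset.map_cons, Multiset.prod_cons, ← hQ]
    rw [Multiset.card_cons] at ht
    cases t with
    | zero =>
      have := ih' 0 (Nat.zero_le _)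
      simp only [mul_coeff_zero, coeff_sub, coeff_X_zero, coeff_C_zero, zero_sub]
      nlinarith
    | succ t =>
      rw [sub_mul, coeff_sub, coeff_X_mul, coeff_C_mul]
      have h1 := ih' t (by omega)
      have h2 := hnn (t + 1)
      nlinarith

lemma poly_core {ι : Type*} [Fintype ι] (q : ℝ[X]) (c : ℝ) (hc : c ≠ 0) (μ : ι → ℝ)
    (hμ : ∀ i, 0 ≤ μ i) (h0 : 0 < q.eval 0)
    (hq : ∀ l : ℝ, 0 < l → (q.eval l) ^ 2 = c * ∏ i, (1 + l * μ i)) :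
    2 * q.natDegree = Fintype.card {i // μ i ≠ 0} ∧ ∀ t ≤ q.natDegree, 0 < q.coeff t := by
  have hq' : q ^ 2 = C c * ∏ i, (C (μ i) * X + C 1) := by
    apply eq_of_infinite_eval_eq
    refine (Set.Ioi_infinite (0 : ℝ)).mono fun l hl => ?_
    simp only [Set.mem_ofPred_eq, eval_pow, eval_mul, eval_C, eval_prod, eval_add, eval_X]
    rw [hq l hl]
    congr 1
    exact Finset.prod_congr rfl fun i _ => by ring
  have hq0 : q ≠ 0 := by rintro rfl; simp at h0
  have hfac : ∀ i, (C (μ i) * X + C 1 : ℝ[X]) ≠ 0 := by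
    intro i h
    have := congrArg (eval 0) h
    simp at this
  have hsplit : q.Splits := by
    refine Splits.of_dvd (g := q ^ 2) ?_ (pow_ne_zero _ hq0) (dvd_pow_self q two_ne_zero)
    rw [hq']
    exact (Splits.C c).mul (Splits.prod fun i _ => Splits.of_natDegree_le_one natDegree_linear_le)
  constructor
  · rw [← natDegree_pow, hq', natDegree_C_mul hc, natDegree_prod _ _ (fun i _ => hfac i),
      Fintype.card_subtype, Finset.card_filter]
    refine Finset.sum_congr rfl fun i _ => ?_
    split_ifs with h
    · exact natDegree_linear h
    · push Not at h
      simp [h]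
  · have hroots : ∀ r ∈ q.roots, r < 0 := by
      intro r hr
      rw [mem_roots hq0, IsRoot.def] at hr
      by_contra hneg
      push Not at hneg
      rcases hneg.eq_or_lt with h | h
      · rw [← h] at hr; linarith
      · have h1 := hq r h
        rw [hr] at h1
        have h2 : 0 < ∏ i, (1 + r * μ i) := Finset.prod_pos fun i _ => by
          have := mul_nonneg h.le (hμ i); linarith
        have : c * ∏ i, (1 + r * μ i) ≠ 0 := mul_ne_zero hc h2.ne'
        exact this (by rw [← h1]; norm_num)
    have hpos := coeff_pos_of_neg_roots q.roots hroots
    have hfacq := hsplit.eq_prod_roots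
    have hcard : Multiset.card q.roots = q.natDegree := hsplit.natDegree_eq_card_roots.symm
    have hlc : 0 < q.leadingCoeff := by
      have h1 : q.coeff 0 = q.leadingCoeff * ((q.roots.map (X - C ·)).prod).coeff 0 := by
        conv_lhs => rw [hfacq]
        rw [coeff_C_mul]
      rw [← coeff_zero_eq_eval_zero, h1] at h0
      exact pos_of_mul_pos_left h0 (hpos 0 (Nat.zero_le _)).le
    intro t ht
    rw [hfacq, coeff_C_mul]
    exact mul_pos hlc (hpos t (hcard ▸ ht))

end PolyHelpers

lemma det_one_add_smul_herm {ι : Type*} [Fintype ι] [DecidableEq ι] {H : Matrix ι ι ℝ}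
    (hH : H.IsHermitian) (l : ℝ) : (1 + l • H).det = ∏ i, (1 + l * hH.eigenvalues i) := by
  have h1 : (1 + l • H) = (hH.eigenvectorUnitary : Matrix ι ι ℝ) *
      (Matrix.diagonal fun i => 1 + l * hH.eigenvalues i) *
      (star hH.eigenvectorUnitary : Matrix ι ι ℝ) := by
    have hd : (Matrix.diagonal fun i => 1 + l * hH.eigenvalues i)
        = 1 + l • Matrix.diagonal (RCLike.ofReal ∘ hH.eigenvalues : ι → ℝ) := by
      ext i j
      by_cases hij : i = j
      · subst hij; simp
      · simp [hij]
    rw [hd, mul_add, add_mul, mul_one, Matrix.mul_smul, Matrix.smul_mul]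
    conv_lhs => rw [hH.spectral_theorem, Unitary.conjStarAlgAut_apply]
    simp
  have h2 : (hH.eigenvectorUnitary : Matrix ι ι ℝ) *
      (star hH.eigenvectorUnitary : Matrix ι ι ℝ) = 1 := by simp
  rw [h1, Matrix.det_mul_right_comm, h2, one_mul, Matrix.det_diagonal]

lemma matrix_core {n : ℕ} (A B : Matrix (Fin n) (Fin n) ℝ)
    (hA : Aᵀ = -A) (hBsymm : Bᵀ = B)
    (hBpd : ∀ x : Fin n → ℝ, x ≠ 0 → 0 < x ⬝ᵥ B *ᵥ x)
    (q : Polynomial ℝ) (K : ℝ) (hK : 0 < K)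
    (hq : ∀ s : ℝ, s ≠ 0 → q.eval (s ^ 2) = K * (B + s • A).det) :
    2 * q.natDegree = A.rank ∧ ∀ t ≤ q.natDegree, 0 < q.coeff t := by
  have hBP : B.PosDef := by
    refine Matrix.PosDef.of_dotProduct_mulVec_pos ?_ fun x hx => by simpa using hBpd x hx
    rw [Matrix.IsHermitian, Matrix.conjTranspose_eq_transpose_of_trivial, hBsymm]
  have hall : (fun s : ℝ => q.eval (s ^ 2)) = fun s => K * (B + s • A).det := by
    refine Continuous.ext_on (dense_compl_singleton (0 : ℝ)) ?_ ?_ ?_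
    · exact q.continuous.comp (continuous_pow 2)
    · refine continuous_const.mul (Continuous.matrix_det ?_)
      fun_prop
    · intro s hs
      exact hq s hs
  have h0 : 0 < q.eval 0 := by
    have := congrFun hall 0
    simp at this
    rw [this]
    exact mul_pos hK hBP.det_pos
  obtain ⟨S, hS⟩ : ∃ S : Matrix (Fin n) (Fin n) ℝ, B = Sᵀ * S := by
    open scoped MatrixOrder in
    obtain ⟨S, hS⟩ := CStarAlgebra.nonneg_iff_eq_star_mul_self.mp hBP.posSemidef.nonneg
    refine ⟨S, ?_⟩
    rw [hS, Matrix.star_eq_conjTranspose, Matrix.conjTranspose_eq_transpose_of_trivial]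
  have hSdet : S.det ≠ 0 := by
    intro h
    have := hBP.det_pos
    rw [hS, Matrix.det_mul, h, mul_zero] at this
    exact lt_irrefl _ this
  have hSu : IsUnit S.det := isUnit_iff_ne_zero.mpr hSdet
  have hStu : IsUnit Sᵀ.det := by rwa [Matrix.det_transpose]
  set A' := (Sᵀ)⁻¹ * A * S⁻¹ with hA'
  have hAA : A = Sᵀ * A' * S := by
    rw [hA']
    simp only [← Matrix.mul_assoc]
    rw [Matrix.mul_nonsing_inv _ hStu, Matrix.one_mul, Matrix.mul_assoc,
      Matrix.nonsing_inv_mul _ hSu, Matrix.mul_one]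
  have hA't : A'ᵀ = -A' := by
    rw [hA']
    simp [Matrix.transpose_mul, Matrix.transpose_nonsing_inv, hA, Matrix.mul_assoc]
  have hrank : A'.rank = A.rank := by
    conv_rhs => rw [hAA, Matrix.rank_mul_eq_left_of_isUnit_det _ _ hSu,
      Matrix.rank_mul_eq_right_of_isUnit_det _ _ hStu]
  have hPSD : (A' * A'ᵀ).PosSemidef := by
    have := Matrix.posSemidef_self_mul_conjTranspose A'
    rwa [Matrix.conjTranspose_eq_transpose_of_trivial] at this
  have hdet : ∀ s : ℝ, (B + s • A).det = S.det ^ 2 * (1 + s • A').det := by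
    intro s
    have : B + s • A = Sᵀ * (1 + s • A') * S := by
      conv_lhs => rw [hS, hAA]
      simp [mul_add, add_mul]
    rw [this, Matrix.det_mul, Matrix.det_mul, Matrix.det_transpose]; ring
  have hneg : ∀ s : ℝ, (1 + s • A').det = (1 + s • A'ᵀ).det := by
    intro s
    rw [← Matrix.det_transpose]; simp
  have hsq : ∀ s : ℝ, (1 + s • A').det ^ 2 = (1 + (s ^ 2) • (A' * A'ᵀ)).det := by
    intro s
    rw [pow_two]
    nth_rw 2 [hneg]
    rw [← Matrix.det_mul]
    congr 1
    rw [hA't]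
    simp [mul_add, add_mul, smul_smul]
    module
  have := poly_core q ((K * S.det ^ 2) ^ 2) (by positivity) hPSD.1.eigenvalues
    hPSD.eigenvalues_nonneg h0 (by
      intro l hl
      have h1 := congrFun hall (Real.sqrt l)
      simp only [Real.sq_sqrt hl.le] at h1
      rw [h1, hdet, ← det_one_add_smul_herm hPSD.1, ← Real.sq_sqrt hl.le, ← hsq,
        Real.sq_sqrt hl.le]
      ring)
  rw [← hPSD.1.rank_eq_card_non_zero_eigs, Matrix.rank_self_mul_transpose, hrank] at this
  exact this

theorem pfaffian_block_coeffs_pos_iff_rank (n : ℕ) (A B : Matrix (Fin n) (Fin n) ℝ)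
    (hA : Aᵀ = -A) (hBsymm : Bᵀ = B)
    (hBpd : ∀ x : Fin n → ℝ, x ≠ 0 → 0 < x ⬝ᵥ B *ᵥ x)
    (p : ℕ → ℝ)
    (hp : ∀ l : ℝ,
      (-1 : ℝ) ^ (n / 2) *
          pf ((Matrix.fromBlocks (-(l • A)) B (-B) A).submatrix
            (blockIndex n).symm (blockIndex n).symm)
        = ∑ t ∈ Finset.range (n / 2 + 1), p t * l ^ t) :
    ∀ t ≤ n / 2, (2 * t ≤ A.rank → 0 < p t) ∧ (A.rank < 2 * t → p t = 0) := by
  set J0 := pfP ((Matrix.fromBlocks 0 1 (-1) 0 :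
    Matrix (Fin n ⊕ Fin n) (Fin n ⊕ Fin n) ℝ).submatrix (gEquiv (Fin n)) (gEquiv (Fin n))) with hJ0
  have hJpos : 0 < J0 := pfP_J_pos
  set q : Polynomial ℝ := ∑ t ∈ Finset.range (n / 2 + 1),
    Polynomial.C (p t) * Polynomial.X ^ t with hqdef
  have hcoeff : ∀ t ≤ n / 2, q.coeff t = p t := by
    intro t ht
    simp [hqdef, Polynomial.coeff_C_mul, Polynomial.coeff_X_pow]
    omega
  have hKpos : (0 : ℝ) < (1 / (n.factorial * 2 ^ n) : ℝ) * J0 := by positivity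
  obtain ⟨hdeg, hpos⟩ := matrix_core A B hA hBsymm hBpd q _ hKpos (by
    intro s hs
    have h1 := hp (s ^ 2)
    rw [pf_block, pfP_main A B hA hBsymm s hs, ← hJ0] at h1
    have h2 : q.eval (s ^ 2) = ∑ t ∈ Finset.range (n / 2 + 1), p t * (s ^ 2) ^ t := by
      simp [hqdef, Polynomial.eval_finsetSum]
    have h3 : ((-1 : ℝ) ^ (n / 2)) * (-1) ^ (n / 2) = 1 := by
      rw [← mul_pow]; simp
    rw [h2, ← h1]
    linear_combination (-(1 / (n.factorial * 2 ^ n) : ℝ) * ((B + s • A).det * J0)) * (-1) * h3)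
  intro t ht
  rw [← hcoeff t ht]
  exact ⟨fun h => hpos t (by omega),
    fun h => Polynomial.coeff_eq_zero_of_natDegree_lt (by omega)⟩
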